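/- Define a₄, a₆ ∈ ℚ[[q]] by: the q^N-coefficient of a₄ is −5·σ₃(N) for N ≥ 1 and 0 for N = 0, and the q^N-coefficient of a₆ is −(5σ₃(N) + 7σ₅(N))/12 for N ≥ 1 and 0 for N = 0, where σ_j(N) = Σ_{m ∣ N} m^j. Let Δ be the discriminant of the Weierstrass curve with coefficients (a₁, a₂, a₃, a₄, a₆) = (1, 0, 0, a₄, a₆) over ℚ[[q]], i.e. Δ = −b₂²b₈ − 8b₄³ − 27b₆² + 9b₂b₄b₆ with b₂ = 1, b₄ = 2a₄, b₆ = 4a₆, b₈ = a₆ − a₄². Then Δ = q·∏_{n=1}^∞ (1 − qⁿ)^{24}, where the infinite product converges in the q-adic (coefficientwise) topology on ℚ[[q]] (the family n ↦ (1 − qⁿ)^{24} is multipliable there). This is the statement that the discriminant of the Tate curve equals q·∏_{n≥1}(1−qⁿ)^{24}. -/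

import Mathlib

noncomputable section

/-- The coefficient series `a₄(q) = -5·Σ_{n≥1} σ₃(n)qⁿ ∈ ℚ[[q]]`. -/
def tateA4 : PowerSeries ℚ :=
  PowerSeries.mk fun N =>
    if N = 0 then 0 else -5 * ∑ m ∈ N.divisors, (m : ℚ) ^ 3

/-- The coefficient series `a₆(q) = -Σ_{n≥1} ((5σ₃(n) + 7σ₅(n))/12)qⁿ ∈ ℚ[[q]]`. -/
def tateA6 : PowerSeries ℚ :=
  PowerSeries.mk fun N =>
    if N = 0 then 0
    else -(5 * (∑ m ∈ N.divisors, (m : ℚ) ^ 3) +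
            7 * (∑ m ∈ N.divisors, (m : ℚ) ^ 5)) / 12

/-- The Tate curve `y² + xy = x³ + a₄(q)x + a₆(q)` as a Weierstrass curve over `ℚ[[q]]`. -/
def tateCurve : WeierstrassCurve (PowerSeries ℚ) :=
  ⟨1, 0, 0, tateA4, tateA6⟩

/-- The product (coefficientwise) topology on `ℚ[[q]] = ((Unit →₀ ℕ) → ℚ)`. -/
local instance : TopologicalSpace (PowerSeries ℚ) :=
  inferInstanceAs (TopologicalSpace ((Unit →₀ ℕ) → ℚ))

/-!
Over `ℂ`, the invariants `c₄ = 1 + 240 ∑ σ₃(n) qⁿ` and `-c₆ = 1 - 504 ∑ σ₅(n) qⁿ` of the Tate curve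
are the `q`-expansions of the Eisenstein series `E₄` and `E₆`. Comparing `1728 Δ = c₄³ - c₆²` with
the identity of modular forms `1728 Δ = E₄³ - E₆²` shows that the discriminant of the Tate curve is
the `q`-expansion of the modular discriminant. As a function of `q` on the unit disc, the latter is
`q ∏ (1 - qⁿ)²⁴`. Finally, the analytic product has the formal product as its Taylor series: locally
uniform convergence of holomorphic functions implies convergence of each Taylor coefficient.
-/

open Filter PowerSeries Topology
open EisensteinSeries ModularForm UpperHalfPlane
open scoped ContDiff MatrixGroups Polynomial

section MaclaurinSeries

variable {𝕜 : Type*} [NontriviallyNormedField 𝕜]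

/-- The Taylor series at `0` of a function, as a formal power series. It is defined for every
function, through the junk values of `iteratedDeriv`, and `UpperHalfPlane.qExpansion h f` is by
definition the series of `cuspFunction h f`. -/
def maclaurinSeries (f : 𝕜 → 𝕜) : 𝕜⟦X⟧ :=
  .mk fun m ↦ (m.factorial : 𝕜)⁻¹ * iteratedDeriv m f 0

lemma coeff_maclaurinSeries (f : 𝕜 → 𝕜) (m : ℕ) :
    coeff m (maclaurinSeries f) = (m.factorial : 𝕜)⁻¹ * iteratedDeriv m f 0 :=
  coeff_mk _ _

lemma maclaurinSeries_congr {f g : 𝕜 → 𝕜} (h : f =ᶠ[𝓝 0] g) :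
    maclaurinSeries f = maclaurinSeries g := by
  ext m
  rw [coeff_maclaurinSeries, coeff_maclaurinSeries, h.iteratedDeriv_eq]

lemma iteratedDeriv_polynomial_eval (p : 𝕜[X]) (m : ℕ) (x : 𝕜) :
    iteratedDeriv m (fun x ↦ p.eval x) x = (Polynomial.derivative^[m] p).eval x := by
  have deriv_eval : Function.Semiconj (fun (p : 𝕜[X]) x ↦ p.eval x) Polynomial.derivative deriv :=
    fun _ ↦ funext fun _ ↦ (Polynomial.deriv _).symm
  rw [iteratedDeriv_eq_iterate]
  exact congrFun (deriv_eval.iterate_right m p).symm x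

variable [CharZero 𝕜]

lemma maclaurinSeries_polynomial_eval (p : 𝕜[X]) :
    maclaurinSeries (fun x ↦ p.eval x) = (p : 𝕜⟦X⟧) := by
  ext m
  have factorial_ne_zero : (m.factorial : 𝕜) ≠ 0 := mod_cast m.factorial_ne_zero
  rw [coeff_maclaurinSeries, iteratedDeriv_polynomial_eval,
    ← Polynomial.coeff_zero_eq_eval_zero, Polynomial.coeff_iterate_derivative, zero_add,
    Nat.descFactorial_self, nsmul_eq_mul, inv_mul_cancel_left₀ factorial_ne_zero,
    Polynomial.coeff_coe]

lemma maclaurinSeries_id : maclaurinSeries (id : 𝕜 → 𝕜) = X := by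
  simpa [Function.id_def] using maclaurinSeries_polynomial_eval (Polynomial.X : 𝕜[X])

lemma maclaurinSeries_one_sub_pow (n : ℕ) :
    maclaurinSeries (fun x : 𝕜 ↦ 1 - x ^ n) = 1 - X ^ n := by
  have eval_eq : (fun x : 𝕜 ↦ 1 - x ^ n) = fun x ↦ (1 - Polynomial.X ^ n : 𝕜[X]).eval x := by
    simp
  rw [eval_eq, maclaurinSeries_polynomial_eval, Polynomial.coe_sub, Polynomial.coe_one,
    Polynomial.coe_pow, Polynomial.coe_X]

lemma maclaurinSeries_mul {f g : 𝕜 → 𝕜} (hf : ContDiffAt 𝕜 ∞ f 0) (hg : ContDiffAt 𝕜 ∞ g 0) :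
    maclaurinSeries (f * g) = maclaurinSeries f * maclaurinSeries g := by
  ext m
  simp only [coeff_mul, coeff_maclaurinSeries,
    iteratedDeriv_mul (hf.of_le (mod_cast le_top)) (hg.of_le (mod_cast le_top)), Finset.mul_sum,
    Finset.Nat.sum_antidiagonal_eq_sum_range_succ_mk]
  refine Finset.sum_congr rfl fun i hi ↦ ?_
  have factorial_ne_zero : (m.factorial : 𝕜) ≠ 0 := mod_cast m.factorial_ne_zero
  rw [Nat.cast_choose 𝕜 (Finset.mem_range_succ_iff.mp hi)]
  field

lemma maclaurinSeries_prod {ι : Type*} {F : ι → 𝕜 → 𝕜} (s : Finset ι)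
    (hF : ∀ i ∈ s, ContDiffAt 𝕜 ∞ (F i) 0) :
    maclaurinSeries (∏ i ∈ s, F i) = ∏ i ∈ s, maclaurinSeries (F i) := by
  classical
  induction s using Finset.induction_on with
  | empty => simpa [Pi.one_def] using maclaurinSeries_polynomial_eval (1 : 𝕜[X])
  | insert i s hi ih =>
    obtain ⟨hFi, hFs⟩ := Finset.forall_mem_insert _ _ _ |>.mp hF
    rw [Finset.prod_insert hi, Finset.prod_insert hi,
      maclaurinSeries_mul hFi (contDiffAt_prod' hFs), ih hFs]

lemma maclaurinSeries_pow {f : 𝕜 → 𝕜} (hf : ContDiffAt 𝕜 ∞ f 0) (n : ℕ) :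
    maclaurinSeries (f ^ n) = maclaurinSeries f ^ n := by
  simpa using maclaurinSeries_prod (Finset.range n) fun _ _ ↦ hf

end MaclaurinSeries

lemma tendstoLocallyUniformlyOn_iteratedDeriv {ι : Type*} {l : Filter ι} {F : ι → ℂ → ℂ}
    {f : ℂ → ℂ} {U : Set ℂ} (hU : IsOpen U) (hF : ∀ i, DifferentiableOn ℂ (F i) U)
    (h : TendstoLocallyUniformlyOn F f l U) (m : ℕ) :
    TendstoLocallyUniformlyOn (fun i ↦ iteratedDeriv m (F i)) (iteratedDeriv m f) l U := by
  induction m with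
  | zero => simpa only [iteratedDeriv_zero] using h
  | succ m ih =>
    simp only [iteratedDeriv_succ]
    refine ih.deriv (.of_forall fun i ↦ ?_) hU
    rw [iteratedDeriv_eq_iterate]
    exact (((hF i).analyticOnNhd hU).iterated_deriv m).differentiableOn

section InfiniteProducts

open scoped PowerSeries.WithPiTopology

lemma tendsto_maclaurinSeries {ι : Type*} {l : Filter ι} {F : ι → ℂ → ℂ} {f : ℂ → ℂ} {U : Set ℂ}
    (hU : IsOpen U) (h0 : 0 ∈ U) (hF : ∀ i, DifferentiableOn ℂ (F i) U)
    (h : TendstoLocallyUniformlyOn F f l U) :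
    Tendsto (fun i ↦ maclaurinSeries (F i)) l (𝓝 (maclaurinSeries f)) := by
  refine (WithPiTopology.tendsto_iff_coeff_tendsto ℂ _ _ _).mpr fun m ↦ ?_
  simp only [coeff_maclaurinSeries]
  exact ((tendstoLocallyUniformlyOn_iteratedDeriv hU hF h m).tendsto_at h0).const_mul _

lemma hasProd_maclaurinSeries {ι : Type*} {F : ι → ℂ → ℂ} {f : ℂ → ℂ} {U : Set ℂ}
    (hU : IsOpen U) (h0 : 0 ∈ U) (hF : ∀ i, DifferentiableOn ℂ (F i) U)
    (h : HasProdLocallyUniformlyOn F f U) :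
    HasProd (fun i ↦ maclaurinSeries (F i)) (maclaurinSeries f) := by
  have contDiffAt_F (i : ι) : ContDiffAt ℂ ∞ (F i) 0 :=
    ((hF i).analyticAt (hU.mem_nhds h0)).contDiffAt
  have partialProd_differentiableOn (s : Finset ι) :
      DifferentiableOn ℂ (fun z ↦ ∏ i ∈ s, F i z) U :=
    .fun_finsetProd fun i _ ↦ hF i
  refine (tendsto_maclaurinSeries hU h0 partialProd_differentiableOn h).congr fun s ↦ ?_
  rw [← Finset.prod_fn, maclaurinSeries_prod s fun i _ ↦ contDiffAt_F i]

lemma maclaurinSeries_tprod_one_sub_pow :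
    maclaurinSeries (fun q : ℂ ↦ ∏' n : ℕ, (1 - q ^ (n + 1))) =
      ∏' n : ℕ, (1 - X ^ (n + 1)) := by
  have product := hasProd_maclaurinSeries Metric.isOpen_ball (Metric.mem_ball_self one_pos)
    (fun _ ↦ by fun_prop) multipliableLocallyUniformlyOn_one_sub_pow.hasProdLocallyUniformlyOn
  simpa only [maclaurinSeries_one_sub_pow] using product.tprod_eq.symm

lemma multipliable_one_sub_X_pow_pow (R : Type*) [CommRing R] [TopologicalSpace R]
    [IsTopologicalRing R] (k : ℕ) :
    Multipliable fun n : ℕ ↦ (1 - X ^ (n + 1) : R⟦X⟧) ^ k :=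
  (WithPiTopology.multipliable_one_sub_X_pow R).pow k

lemma continuous_powerSeries_map {R S : Type*} [Semiring R] [Semiring S] [TopologicalSpace R]
    [TopologicalSpace S] {φ : R →+* S} (hφ : Continuous φ) : Continuous (PowerSeries.map φ) :=
  continuous_pi fun d ↦ hφ.comp (continuous_apply d)

lemma map_tprod_one_sub_X_pow_pow {R S : Type*} [CommRing R] [CommRing S] [TopologicalSpace R]
    [TopologicalSpace S] [IsTopologicalRing R] [T2Space S] {φ : R →+* S} (hφ : Continuous φ)
    (k : ℕ) :
    PowerSeries.map φ (∏' n : ℕ, (1 - X ^ (n + 1)) ^ k) =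
      ∏' n : ℕ, (1 - X ^ (n + 1)) ^ k := by
  rw [(multipliable_one_sub_X_pow_pow R k).map_tprod _ (continuous_powerSeries_map hφ)]
  simp only [map_pow, map_sub, map_one, map_X]

lemma qExpansion_discriminant :
    qExpansion 1 ModularForm.discriminant =
      X * ∏' n : ℕ, (1 - X ^ (n + 1)) ^ 24 := by
  set eulerProduct : ℂ → ℂ := fun q ↦ ∏' n : ℕ, (1 - q ^ (n + 1))
  have eulerProduct_contDiffAt : ContDiffAt ℂ ∞ eulerProduct 0 :=
    (differentiableOn_tprod_one_sub_pow.analyticAt (Metric.ball_mem_nhds 0 one_pos)).contDiffAt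
  have cuspFunction_eq : cuspFunction 1 ModularForm.discriminant =ᶠ[𝓝 0]
      id * eulerProduct ^ 24 := by
    filter_upwards [Metric.ball_mem_nhds 0 one_pos] with q hq
    rw [discriminant_cuspFunction_eqOn hq]
    exact congrArg (q * ·) ((multipliable_one_sub_pow (mem_ball_zero_iff.mp hq)).tprod_pow 24)
  calc qExpansion 1 ModularForm.discriminant
    _ = maclaurinSeries (id * eulerProduct ^ 24) := maclaurinSeries_congr cuspFunction_eq
    _ = maclaurinSeries id * maclaurinSeries eulerProduct ^ 24 := by
      rw [← maclaurinSeries_pow eulerProduct_contDiffAt]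
      exact maclaurinSeries_mul contDiffAt_id (eulerProduct_contDiffAt.pow 24)
    _ = X * (∏' n : ℕ, (1 - X ^ (n + 1))) ^ 24 := by
      rw [maclaurinSeries_id, maclaurinSeries_tprod_one_sub_pow]
    _ = X * ∏' n : ℕ, (1 - X ^ (n + 1)) ^ 24 := by
      rw [(WithPiTopology.multipliable_one_sub_X_pow ℂ).tprod_pow]

end InfiniteProducts

lemma qExpansion_discriminant_eq_E₄_cube_sub_E₆_sq :
    1728 * qExpansion 1 ModularForm.discriminant = qExpansion 1 E₄ ^ 3 - qExpansion 1 E₆ ^ 2 := by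
  have pointwise :
      (1728 : ℂ) • ⇑CuspForm.discriminant = ⇑(E₄.pow 3) - ⇑(E₆.pow 2) := by
    ext z
    simp only [Pi.smul_apply, Pi.sub_apply, CuspForm.coe_discriminant, ModularForm.coe_pow,
      Pi.pow_apply, smul_eq_mul, discriminant_eq_E₄_cube_sub_E₆_sq z]
    ring
  calc 1728 * qExpansion 1 ModularForm.discriminant
    _ = qExpansion 1 ((1728 : ℂ) • ⇑CuspForm.discriminant) := by
      rw [ModularForm.qExpansion_smul one_pos one_mem_strictPeriods_SL, smul_eq_C_mul, map_ofNat,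
        CuspForm.coe_discriminant]
    _ = qExpansion 1 E₄ ^ 3 - qExpansion 1 E₆ ^ 2 := by
      rw [pointwise, ModularForm.qExpansion_sub one_pos one_mem_strictPeriods_SL,
        ModularForm.qExpansion_pow one_pos one_mem_strictPeriods_SL,
        ModularForm.qExpansion_pow one_pos one_mem_strictPeriods_SL]

lemma tateCurve_c₄ : tateCurve.c₄ = 1 - 48 * tateA4 := by
  simp only [WeierstrassCurve.c₄, WeierstrassCurve.b₂, WeierstrassCurve.b₄, tateCurve]
  ring

lemma tateCurve_c₆ : tateCurve.c₆ = -1 + 72 * tateA4 - 864 * tateA6 := by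
  simp only [WeierstrassCurve.c₆, WeierstrassCurve.b₂, WeierstrassCurve.b₄, WeierstrassCurve.b₆,
    tateCurve]
  ring

lemma coeff_tateCurve_c₄ (n : ℕ) :
    coeff n tateCurve.c₄ = if n = 0 then 1 else 240 * (ArithmeticFunction.sigma 3 n : ℚ) := by
  rw [tateCurve_c₄, ← map_ofNat (C (R := ℚ)) 48, map_sub, coeff_C_mul, coeff_one, tateA4, coeff_mk]
  split_ifs with hn
  · norm_num
  · rw [ArithmeticFunction.sigma_apply]
    push_cast
    ring

lemma coeff_tateCurve_c₆ (n : ℕ) :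
    coeff n tateCurve.c₆ = if n = 0 then -1 else 504 * (ArithmeticFunction.sigma 5 n : ℚ) := by
  rw [tateCurve_c₆, ← map_ofNat (C (R := ℚ)) 72, ← map_ofNat (C (R := ℚ)) 864, map_sub, map_add,
    map_neg, coeff_C_mul, coeff_C_mul, coeff_one, tateA4, tateA6, coeff_mk, coeff_mk]
  split_ifs with hn
  · norm_num
  · rw [ArithmeticFunction.sigma_apply]
    push_cast
    ring

lemma bernoulli_four : bernoulli 4 = -1 / 30 := by
  rw [bernoulli_eq_bernoulli'_of_ne_one (by norm_num), bernoulli'_four]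

lemma bernoulli_six : bernoulli 6 = 1 / 42 := by
  decide +kernel

lemma qExpansion_E₄ : qExpansion 1 E₄ = PowerSeries.map (algebraMap ℚ ℂ) tateCurve.c₄ := by
  ext m
  rw [E_qExpansion_coeff _ ⟨2, rfl⟩, coeff_map, coeff_tateCurve_c₄, bernoulli_four]
  split_ifs <;> norm_num

lemma qExpansion_E₆ : qExpansion 1 E₆ = -PowerSeries.map (algebraMap ℚ ℂ) tateCurve.c₆ := by
  ext m
  rw [E_qExpansion_coeff _ ⟨3, rfl⟩, map_neg, coeff_map, coeff_tateCurve_c₆, bernoulli_six]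
  split_ifs <;> norm_num

lemma map_tateCurve_Δ :
    PowerSeries.map (algebraMap ℚ ℂ) tateCurve.Δ = qExpansion 1 ModularForm.discriminant := by
  have : CharZero ℂ⟦X⟧ := charZero_of_injective_ringHom C_injective
  apply mul_left_cancel₀ (OfNat.ofNat_ne_zero 1728 : (1728 : ℂ⟦X⟧) ≠ 0)
  rw [qExpansion_discriminant_eq_E₄_cube_sub_E₆_sq, qExpansion_E₄, qExpansion_E₆, neg_sq]
  simpa only [map_mul, map_sub, map_pow, map_ofNat] using
    congrArg (PowerSeries.map (algebraMap ℚ ℂ)) tateCurve.c_relation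

/-- **The discriminant of the Tate curve:** `Δ = q·∏_{n=1}^∞ (1 - qⁿ)^24`, the family
`n ↦ (1 - qⁿ)^24` being multipliable for the coefficientwise topology on `ℚ[[q]]`. -/
theorem tateCurve_discriminant :
    Multipliable (fun n : ℕ => ((1 : PowerSeries ℚ) - PowerSeries.X ^ (n + 1)) ^ 24) ∧
    tateCurve.Δ =
      PowerSeries.X * ∏' n : ℕ, ((1 : PowerSeries ℚ) - PowerSeries.X ^ (n + 1)) ^ 24 := by
  refine ⟨multipliable_one_sub_X_pow_pow ℚ 24, ?_⟩
  apply PowerSeries.map_injective (algebraMap ℚ ℂ) (algebraMap ℚ ℂ).injective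
  rw [map_tateCurve_Δ, qExpansion_discriminant, map_mul, map_X]
  exact congrArg (X * ·) (map_tprod_one_sub_X_pow_pow (continuous_algebraMap ℚ ℂ) 24).symm

end
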